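/- The modified mean-field vector field l̂ on (ℝ^{ℤ₊})^M defined via truncation θ(x) = max(0, min(x,1)) — namely l̂_0^{(j)}(u) = 0 and l̂_k^{(j)}(u) = (λ/γⱼ)[θ(u_{k−1}^{(j)})^{dⱼ} − θ(u_k^{(j)})^{dⱼ}]₊·∏_{i<j}θ(u_{k−1}^{(i)})^{d_i}·∏_{i>j}θ(u_k^{(i)})^{d_i} − μCⱼ[θ(u_k^{(j)}) − θ(u_{k+1}^{(j)})]₊ — is Lipschitz with respect to the norm ‖u‖ = sup_j sup_k |u_k^{(j)}|/(k+1): there is a constant K₂ = 4Mλ(max_j dⱼ)/(min_j γⱼ) + 3μ(max_j Cⱼ) such that ‖l̂(u) − l̂(w)‖ ≤ K₂‖u − w‖ for all u, w. -/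

import Mathlib

open Finset

/-- Truncation `θ(x) = max 0 (min x 1)`. -/
noncomputable def trunc (x : ℝ) : ℝ := max 0 (min x 1)

/-- The modified (truncated) Scheme-1 mean-field vector field `l̂` on `(ℝ^ℤ₊)^M`. -/
noncomputable def meanFieldLhat {M : ℕ} (lam mu : ℝ) (γ C : Fin M → ℝ)
    (d : Fin M → ℕ) (u : Fin M → ℕ → ℝ) (j : Fin M) : ℕ → ℝ
  | 0 => 0
  | (k + 1) =>
      (lam / γ j) * max 0 ((trunc (u j k)) ^ (d j) - (trunc (u j (k + 1))) ^ (d j)) *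
          (∏ i ∈ univ.filter (fun i => i < j), (trunc (u i k)) ^ (d i)) *
          (∏ i ∈ univ.filter (fun i => j < i), (trunc (u i (k + 1))) ^ (d i)) -
        mu * C j * max 0 (trunc (u j (k + 1)) - trunc (u j (k + 2)))

/-!
Every factor of the arrival term of `l̂` has absolute value at most one, and for such factors the
difference of two products is at most the sum of the differences of the factors. Hence, when two
consecutive levels are perturbed by at most `B`, the arrival term moves by at most
`(dⱼ + ∑ᵢ dᵢ) B`: `dⱼ B` for each of the two powers in the positive part, and `dᵢ B` for each of
the other pools. The levels `k` and `k + 1` entering `l̂_{k+1}` have no larger scale than the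
output, and the scale of level `k + 2` is at most twice as large, so the departure term
contributes `1 + 2 = 3`.
-/

section ContractiveProducts

theorem abs_mul_sub_mul_le {R : Type*} [Ring R] [LinearOrder R] [IsOrderedRing R]
    {a a' b b' : R} (ha' : |a'| ≤ 1) (hb : |b| ≤ 1) :
    |a * b - a' * b'| ≤ |a - a'| + |b - b'| :=
  calc |a * b - a' * b'| = |(a - a') * b + a' * (b - b')| := by
        rw [sub_mul, mul_sub, sub_add_sub_cancel]
    _ ≤ |a - a'| * |b| + |a'| * |b - b'| := by
        simpa only [abs_mul] using abs_add_le ((a - a') * b) (a' * (b - b'))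
    _ ≤ |a - a'| + |b - b'| :=
        add_le_add (mul_le_of_le_one_right (abs_nonneg _) hb)
          (mul_le_of_le_one_left (abs_nonneg _) ha')

variable {R : Type*} [CommRing R] [LinearOrder R] [IsStrictOrderedRing R]

theorem abs_prod_le_one {ι : Type*} {s : Finset ι} {f : ι → R} (hf : ∀ i ∈ s, |f i| ≤ 1) :
    |∏ i ∈ s, f i| ≤ 1 :=
  (abs_prod s f).trans_le (prod_le_one (fun _ _ => abs_nonneg _) hf)

theorem abs_prod_sub_prod_le {ι : Type*} {s : Finset ι} {f g : ι → R}
    (hf : ∀ i ∈ s, |f i| ≤ 1) (hg : ∀ i ∈ s, |g i| ≤ 1) :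
    |∏ i ∈ s, f i - ∏ i ∈ s, g i| ≤ ∑ i ∈ s, |f i - g i| := by
  induction s using Finset.cons_induction with
  | empty => simp
  | cons a s ha ih =>
    rw [forall_mem_cons] at hf hg
    rw [prod_cons, prod_cons, sum_cons]
    exact (abs_mul_sub_mul_le hg.1 (abs_prod_le_one hf.2)).trans
      (add_le_add_right (ih hf.2 hg.2) _)

theorem abs_pow_sub_pow_le_mul_abs_sub {a b : R} (ha : |a| ≤ 1) (hb : |b| ≤ 1) (n : ℕ) :
    |a ^ n - b ^ n| ≤ n * |a - b| := by
  simpa using abs_prod_sub_prod_le (s := range n) (fun _ _ => ha) (fun _ _ => hb)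

end ContractiveProducts

section PositivePart

variable {α : Type*} [AddCommGroup α] [LinearOrder α] [IsOrderedAddMonoid α]

theorem abs_max_zero_sub_max_zero_le (a b a' b' : α) :
    |max 0 (a - b) - max 0 (a' - b')| ≤ |a - a'| + |b - b'| :=
  calc |max 0 (a - b) - max 0 (a' - b')| ≤ |(a - b) - (a' - b')| := by
        simpa only [max_comm] using abs_max_sub_max_le_abs (a - b) (a' - b') 0
    _ = |(a - a') - (b - b')| := by rw [sub_sub_sub_comm]
    _ ≤ |a - a'| + |b - b'| := abs_sub _ _

end PositivePart

section UnitInterval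

theorem abs_le_one_of_mem_unitInterval {x : ℝ} (hx : x ∈ unitInterval) : |x| ≤ 1 :=
  (abs_of_nonneg hx.1).trans_le hx.2

theorem max_zero_sub_mem_unitInterval {x y : ℝ} (hx : x ∈ unitInterval) (hy : y ∈ unitInterval) :
    max 0 (x - y) ∈ unitInterval :=
  ⟨le_max_left _ _, max_le zero_le_one ((sub_le_self x hy.1).trans hx.2)⟩

end UnitInterval

section Truncation

theorem trunc_mem_unitInterval (x : ℝ) : trunc x ∈ unitInterval :=
  ⟨le_max_left _ _, max_le zero_le_one (min_le_right _ _)⟩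

theorem trunc_pow_mem_unitInterval (x : ℝ) (n : ℕ) : trunc x ^ n ∈ unitInterval :=
  pow_mem (S := unitInterval.submonoid) (trunc_mem_unitInterval x) n

theorem abs_trunc_pow_le_one (x : ℝ) (n : ℕ) : |trunc x ^ n| ≤ 1 :=
  abs_le_one_of_mem_unitInterval (trunc_pow_mem_unitInterval x n)

theorem abs_trunc_sub_trunc_le (x y : ℝ) : |trunc x - trunc y| ≤ |x - y| :=
  calc |trunc x - trunc y| ≤ |min x 1 - min y 1| := by
        simpa only [trunc, max_comm] using abs_max_sub_max_le_abs (min x 1) (min y 1) 0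
    _ ≤ |x - y| := by simpa using abs_min_sub_min_le_max x 1 y 1

theorem abs_trunc_pow_sub_trunc_pow_le (x y : ℝ) (n : ℕ) :
    |trunc x ^ n - trunc y ^ n| ≤ n * |x - y| :=
  calc |trunc x ^ n - trunc y ^ n| ≤ n * |trunc x - trunc y| :=
        abs_pow_sub_pow_le_mul_abs_sub (abs_le_one_of_mem_unitInterval (trunc_mem_unitInterval x))
          (abs_le_one_of_mem_unitInterval (trunc_mem_unitInterval y)) n
    _ ≤ n * |x - y| :=
        mul_le_mul_of_nonneg_left (abs_trunc_sub_trunc_le x y) n.cast_nonneg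

theorem abs_prod_trunc_pow_le_one {ι : Type*} (s : Finset ι) (d : ι → ℕ) (x : ι → ℝ) :
    |∏ i ∈ s, trunc (x i) ^ d i| ≤ 1 :=
  abs_prod_le_one fun i _ => abs_trunc_pow_le_one (x i) (d i)

theorem abs_prod_trunc_pow_sub_le {ι : Type*} (s : Finset ι) (d : ι → ℕ) (x y : ι → ℝ) :
    |∏ i ∈ s, trunc (x i) ^ d i - ∏ i ∈ s, trunc (y i) ^ d i| ≤ ∑ i ∈ s, d i * |x i - y i| :=
  (abs_prod_sub_prod_le (fun _ _ => abs_trunc_pow_le_one _ _)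
    (fun _ _ => abs_trunc_pow_le_one _ _)).trans
    (sum_le_sum fun _ _ => abs_trunc_pow_sub_trunc_pow_le _ _ _)

end Truncation

section ArrivalTerm

variable {ι : Type*} [LinearOrder ι] [LocallyFiniteOrderTop ι] [LocallyFiniteOrderBot ι]

/-- The arrival term of `l̂` in pool `j`, without its rate `λ / γⱼ`. The arguments `x` and `y` are
two consecutive levels `(u_k^{(i)})ᵢ` and `(u_{k+1}^{(i)})ᵢ` of the state, so that its Lipschitz
estimate does not involve the weights `1 / (k + 1)`. -/
noncomputable def arrivalTerm (d : ι → ℕ) (x y : ι → ℝ) (j : ι) : ℝ :=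
  max 0 (trunc (x j) ^ d j - trunc (y j) ^ d j) * (∏ i ∈ Iio j, trunc (x i) ^ d i) *
    ∏ i ∈ Ioi j, trunc (y i) ^ d i

theorem abs_arrivalTerm_sub_le (d : ι → ℕ) (x y x' y' : ι → ℝ) (j : ι) :
    |arrivalTerm d x y j - arrivalTerm d x' y' j| ≤
      (d j * |x j - x' j| + d j * |y j - y' j| + ∑ i ∈ Iio j, d i * |x i - x' i|) +
        ∑ i ∈ Ioi j, d i * |y i - y' i| := by
  have abs_gap_le_one (s t : ℝ) : |max 0 (trunc s ^ d j - trunc t ^ d j)| ≤ 1 :=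
    abs_le_one_of_mem_unitInterval <| max_zero_sub_mem_unitInterval
      (trunc_pow_mem_unitInterval s (d j)) (trunc_pow_mem_unitInterval t (d j))
  have abs_gap_mul_prod_le_one : |max 0 (trunc (x' j) ^ d j - trunc (y' j) ^ d j) *
      ∏ i ∈ Iio j, trunc (x' i) ^ d i| ≤ 1 := by
    rw [abs_mul]
    exact mul_le_one₀ (abs_gap_le_one _ _) (abs_nonneg _) (abs_prod_trunc_pow_le_one _ _ _)
  have gap_sub_le : |max 0 (trunc (x j) ^ d j - trunc (y j) ^ d j) -
      max 0 (trunc (x' j) ^ d j - trunc (y' j) ^ d j)| ≤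
        d j * |x j - x' j| + d j * |y j - y' j| :=
    (abs_max_zero_sub_max_zero_le _ _ _ _).trans <|
      add_le_add (abs_trunc_pow_sub_trunc_pow_le _ _ _) (abs_trunc_pow_sub_trunc_pow_le _ _ _)
  have gap_mul_prod_sub_le :=
    (abs_mul_sub_mul_le (abs_gap_le_one _ _) (abs_prod_trunc_pow_le_one (Iio j) d x)).trans
      (add_le_add gap_sub_le (abs_prod_trunc_pow_sub_le (Iio j) d x x'))
  exact (abs_mul_sub_mul_le abs_gap_mul_prod_le_one (abs_prod_trunc_pow_le_one (Ioi j) d y)).trans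
    (add_le_add gap_mul_prod_sub_le (abs_prod_trunc_pow_sub_le (Ioi j) d y y'))

theorem abs_arrivalTerm_sub_le_of_forall_le [Fintype ι] (d : ι → ℕ) {x y x' y' : ι → ℝ} {B : ℝ}
    (hx : ∀ i, |x i - x' i| ≤ B) (hy : ∀ i, |y i - y' i| ≤ B) (j : ι) :
    |arrivalTerm d x y j - arrivalTerm d x' y' j| ≤ (d j + ∑ i, (d i : ℝ)) * B :=
  calc |arrivalTerm d x y j - arrivalTerm d x' y' j|
      ≤ (d j * B + d j * B + ∑ i ∈ Iio j, d i * B) + ∑ i ∈ Ioi j, d i * B := by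
        refine (abs_arrivalTerm_sub_le d x y x' y' j).trans ?_
        gcongr with i _ i _
        exacts [hx j, hy j, hx i, hy i]
    _ = (d j + (d j + (∑ i ∈ Ioi j, (d i : ℝ) + ∑ i ∈ Iio j, (d i : ℝ)))) * B := by
        rw [← sum_mul, ← sum_mul]
        ring
    _ = (d j + ∑ i, (d i : ℝ)) * B := by
        rw [Fintype.sum_eq_add_sum_compl j, ← Ioi_disjUnion_Iio, sum_disjUnion]

end ArrivalTerm

theorem add_sum_le_card_add_one_mul_iSup {ι : Type*} [Fintype ι] (x : ι → ℝ) (j : ι) :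
    x j + ∑ i, x i ≤ (Fintype.card ι + 1) * ⨆ i, x i := by
  have le_iSup_x (i : ι) : x i ≤ ⨆ i, x i := le_ciSup (Finite.bddAbove_range x) i
  have sum_le : ∑ i, x i ≤ Fintype.card ι * ⨆ i, x i := by
    simpa using sum_le_card_nsmul univ x _ fun i _ => le_iSup_x i
  linarith [le_iSup_x j]

section MeanField

variable {M : ℕ} {lam mu : ℝ} {γ C : Fin M → ℝ} {u w : Fin M → ℕ → ℝ} {b : ℝ}

theorem meanFieldLhat_succ (d : Fin M → ℕ) (j : Fin M) (k : ℕ) :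
    meanFieldLhat lam mu γ C d u j (k + 1) =
      lam / γ j * arrivalTerm d (u · k) (u · (k + 1)) j -
        mu * C j * max 0 (trunc (u j (k + 1)) - trunc (u j (k + 2))) := by
  simp only [meanFieldLhat, arrivalTerm, filter_gt_eq_Iio, filter_lt_eq_Ioi, mul_assoc]

theorem abs_meanFieldLhat_sub_le (hlam : 0 ≤ lam) (hmu : 0 ≤ mu) (d : Fin M → ℕ)
    (hb : ∀ i n, |u i n - w i n| ≤ b * (n + 1)) {j : Fin M} (hγ : 0 < γ j) (hC : 0 ≤ C j) (k : ℕ) :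
    |meanFieldLhat lam mu γ C d u j k - meanFieldLhat lam mu γ C d w j k| ≤
      (lam / γ j * (d j + ∑ i, (d i : ℝ)) + 3 * mu * C j) * (b * (k + 1)) := by
  have hb0 : 0 ≤ b := by simpa using (abs_nonneg _).trans (hb j 0)
  cases k with
  | zero =>
    simp only [meanFieldLhat, sub_self, abs_zero]
    positivity
  | succ k =>
    set B : ℝ := b * ((k + 1 : ℕ) + 1) with hB
    have level_le (n : ℕ) (hn : n ≤ k + 1) (i : Fin M) : |u i n - w i n| ≤ B :=
      (hb i n).trans (by rw [hB]; gcongr)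
    have next_level_le : |u j (k + 2) - w j (k + 2)| ≤ 2 * B :=
      (hb j (k + 2)).trans <| by rw [hB]; push_cast; nlinarith
    have arrival_le :=
      abs_arrivalTerm_sub_le_of_forall_le d (level_le k k.le_succ) (level_le (k + 1) le_rfl) j
    have departure_le := (abs_max_zero_sub_max_zero_le _ _ _ _).trans <| add_le_add
      ((abs_trunc_sub_trunc_le _ _).trans (level_le (k + 1) le_rfl j))
      ((abs_trunc_sub_trunc_le _ _).trans next_level_le)
    rw [meanFieldLhat_succ, meanFieldLhat_succ, sub_sub_sub_comm, ← mul_sub, ← mul_sub]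
    refine (abs_sub _ _).trans ?_
    rw [abs_mul, abs_mul, abs_of_nonneg (by positivity : 0 ≤ lam / γ j),
      abs_of_nonneg (by positivity : 0 ≤ mu * C j)]
    calc _ ≤ lam / γ j * ((d j + ∑ i, (d i : ℝ)) * B) + mu * C j * (B + 2 * B) := by gcongr
      _ = _ := by ring

theorem meanFieldLhat_lipschitz_general (hlam : 0 ≤ lam) (hmu : 0 ≤ mu) (d : Fin M → ℕ)
    (hγ : ∀ j, 0 < γ j) (hC : ∀ j, 0 ≤ C j) (hb : ∀ j k, |u j k - w j k| / (k + 1) ≤ b)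
    (j : Fin M) (k : ℕ) :
    |meanFieldLhat lam mu γ C d u j k - meanFieldLhat lam mu γ C d w j k| / (k + 1) ≤
      (4 * M * lam * (⨆ j, (d j : ℝ)) / (⨅ j, γ j) + 3 * mu * (⨆ j, C j)) * b := by
  have : Nonempty (Fin M) := ⟨j⟩
  have hb0 : 0 ≤ b := le_trans (by positivity) (hb j 0)
  have one_le_M : (1 : ℝ) ≤ M := by exact_mod_cast j.pos
  have degrees_le : d j + ∑ i, (d i : ℝ) ≤ 4 * M * ⨆ i, (d i : ℝ) :=
    calc d j + ∑ i, (d i : ℝ) ≤ (M + 1) * ⨆ i, (d i : ℝ) := by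
          simpa using add_sum_le_card_add_one_mul_iSup (fun i => (d i : ℝ)) j
      _ ≤ 4 * M * ⨆ i, (d i : ℝ) :=
          mul_le_mul_of_nonneg_right (by linarith) (Real.iSup_nonneg fun i => (d i).cast_nonneg)
  have iInf_pos : 0 < ⨅ i, γ i := by
    obtain ⟨i, hi⟩ := exists_eq_ciInf_of_finite (f := γ)
    exact hi ▸ hγ i
  have iInf_le_γ : ⨅ i, γ i ≤ γ j := ciInf_le (Finite.bddBelow_range γ) j
  have C_le_iSup : C j ≤ ⨆ i, C i := le_ciSup (Finite.bddAbove_range C) j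
  rw [div_le_iff₀ (by positivity)]
  calc _ ≤ (lam / γ j * (d j + ∑ i, (d i : ℝ)) + 3 * mu * C j) * (b * (k + 1)) :=
        abs_meanFieldLhat_sub_le hlam hmu d
          (fun i n => (div_le_iff₀ (by positivity)).1 (hb i n)) (hγ j) (hC j) k
    _ ≤ (lam / (⨅ i, γ i) * (4 * M * ⨆ i, (d i : ℝ)) + 3 * mu * (⨆ i, C i)) * (b * (k + 1)) := by
        gcongr
    _ = _ := by ring

end MeanField

/-- `l̂` is Lipschitz with constant `K₂ = 4Mλ(maxⱼ dⱼ)/(minⱼ γⱼ) + 3μ(maxⱼ Cⱼ)`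
with respect to the weighted sup norm `‖u‖ = sup_{j,k} |u_k^{(j)}|/(k+1)`. -/
theorem meanFieldLhat_lipschitz
    (M : ℕ) (hM : 1 ≤ M) (lam mu : ℝ) (hlam : 0 < lam) (hmu : 0 < mu)
    (γ C : Fin M → ℝ) (d : Fin M → ℕ)
    (hγ : ∀ j, 0 < γ j ∧ γ j ≤ 1) (hC : ∀ j, 0 < C j) (hd : ∀ j, 1 ≤ d j)
    (u w : Fin M → ℕ → ℝ) (b : ℝ)
    (hb : ∀ j k, |u j k - w j k| / (k + 1) ≤ b) :
    ∀ j k, |meanFieldLhat lam mu γ C d u j k - meanFieldLhat lam mu γ C d w j k| / (k + 1) ≤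
      (4 * M * lam * (⨆ j, (d j : ℝ)) / (⨅ j, γ j) + 3 * mu * (⨆ j, C j)) * b := by
  exact meanFieldLhat_lipschitz_general hlam.le hmu.le d (fun j => (hγ j).1) (fun j => (hC j).le) hb
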